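/- arXiv:1711.05399 — 2 statements merged into one kernel-verified Lean document; each statement's English description precedes it below -/
import Mathlib

section
/- Let R be an integral domain with quotient field K and h a prime valuation on R. For each k ∈ ℕ let Δ_k = {Q ∈ Spec(R) : h(Q) ≤ k}, and for an R-submodule E of K let E^{*_k} = ∩{E·R_Q : Q ∈ Δ_k}, where E·R_Q denotes the R_Q-submodule of K generated by E (with R_Q viewed as a subring of K). Then for every nonzero prime ideal P of R, h(P) = inf{k ∈ ℕ : P^{*_k} ≠ R^{*_k}} (with the convention inf ∅ = ∞). -/
/-- A prime valuation on an integral domain `R`: a function on prime ideals with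
`h 0 = 0` that is monotone with respect to inclusion. -/
def IsPrimeValuation (R : Type*) [CommRing R] (h : PrimeSpectrum R → ℕ∞) : Prop :=
  (∀ P : PrimeSpectrum R, P.asIdeal = ⊥ → h P = 0) ∧
  (∀ P Q : PrimeSpectrum R, P.asIdeal ≤ Q.asIdeal → h P ≤ h Q)

/-- The image of an ideal of `R` in the quotient field, as an `R`-submodule. -/
def idealToFrac (R : Type*) [CommRing R] [IsDomain R] (I : Ideal R) :
    Submodule R (FractionRing R) :=
  Submodule.map (Algebra.linearMap R (FractionRing R)) I

/-- The localization `R_Q` of `R` at a prime `Q`, viewed as a subset of the quotient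
field: the elements expressible as fractions `r/s` with `s ∉ Q`. -/
def locAtSet (R : Type*) [CommRing R] [IsDomain R] (Q : PrimeSpectrum R) :
    Set (FractionRing R) :=
  {y : FractionRing R | ∃ r s : R, s ∉ Q.asIdeal ∧
    algebraMap R (FractionRing R) s * y = algebraMap R (FractionRing R) r}

/-- The `R_Q`-submodule `E·R_Q` of the quotient field generated by an `R`-submodule `E`. -/
def locSMul (R : Type*) [CommRing R] [IsDomain R] (Q : PrimeSpectrum R)
    (E : Submodule R (FractionRing R)) : Submodule R (FractionRing R) :=
  Submodule.span R {z : FractionRing R | ∃ y ∈ locAtSet R Q, ∃ e ∈ E, z = y * e}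

/-- The spectral semistar operation `*_k` induced by a prime valuation `h`:
`E^{*_k} = ∩ {E·R_Q : Q prime with h(Q) ≤ k}`. -/
def specStar (R : Type*) [CommRing R] [IsDomain R] (h : PrimeSpectrum R → ℕ∞) (k : ℕ)
    (E : Submodule R (FractionRing R)) : Submodule R (FractionRing R) :=
  ⨅ (Q : PrimeSpectrum R) (_ : h Q ≤ (k : ℕ∞)), locSMul R Q E

/-!
An element `z` of the quotient field lies in `E·R_Q` iff `s • z ∈ E` for some `s ∉ Q`. For an ideal
`I` this makes `I·R_Q = R_Q` exactly when `I ⊄ Q`, and `1` detects the difference otherwise. Hence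
`I^{*_k} ≠ R^{*_k}` iff some `Q ⊇ I` has `h Q ≤ k`, so the infimum of these `k` is the infimum of
`h` over the primes containing `I`; for `I = P` prime and `h` monotone it is attained at `P`.
-/

theorem iInf_natCast_ge_eq (n : ℕ∞) : ⨅ (k : ℕ) (_ : n ≤ k), (k : ℕ∞) = n := by
  refine le_antisymm ?_ (le_iInf₂ fun _ hk => hk)
  cases n with
  | top => exact le_top
  | coe m => exact iInf₂_le_of_le m le_rfl le_rfl

theorem algebraMap_ne_zero_of_notMem {R : Type*} [CommRing R] {I : Ideal R} {s : R}
    (hs : s ∉ I) : algebraMap R (FractionRing R) s ≠ 0 := by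
  simpa using (ne_of_mem_of_not_mem I.zero_mem hs).symm

section

variable {R : Type*} [CommRing R] [IsDomain R]

theorem algebraMap_mem_idealToFrac {I : Ideal R} {r : R} :
    algebraMap R (FractionRing R) r ∈ idealToFrac R I ↔ r ∈ I :=
  (IsFractionRing.injective R (FractionRing R)).mem_set_image

theorem idealToFrac_mono {I J : Ideal R} (hIJ : I ≤ J) : idealToFrac R I ≤ idealToFrac R J :=
  Submodule.map_mono hIJ

theorem mul_mem_locSMul {Q : PrimeSpectrum R} {E : Submodule R (FractionRing R)}
    {y e : FractionRing R} (hy : y ∈ locAtSet R Q) (he : e ∈ E) : y * e ∈ locSMul R Q E :=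
  Submodule.subset_span ⟨y, hy, e, he, rfl⟩

theorem inv_algebraMap_mem_locAtSet {Q : PrimeSpectrum R} {s : R} (hs : s ∉ Q.asIdeal) :
    (algebraMap R (FractionRing R) s)⁻¹ ∈ locAtSet R Q :=
  ⟨1, s, hs, by rw [mul_inv_cancel₀ (algebraMap_ne_zero_of_notMem hs), map_one]⟩

theorem mem_locSMul_iff {Q : PrimeSpectrum R} {E : Submodule R (FractionRing R)}
    {z : FractionRing R} : z ∈ locSMul R Q E ↔ ∃ s ∉ Q.asIdeal, s • z ∈ E := by
  constructor
  · intro hz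
    induction hz using Submodule.span_induction with
    | mem _ hx =>
      obtain ⟨y, ⟨r, s, hs, hsy⟩, e, he, rfl⟩ := hx
      refine ⟨s, hs, ?_⟩
      rw [Algebra.smul_def, ← mul_assoc, hsy, ← Algebra.smul_def]
      exact E.smul_mem r he
    | zero => exact ⟨1, Q.isPrime.one_notMem, by simp⟩
    | add x y _ _ hx hy =>
      obtain ⟨s, hs, hsx⟩ := hx
      obtain ⟨t, ht, hty⟩ := hy
      refine ⟨s * t, Q.isPrime.mul_notMem hs ht, ?_⟩
      rw [smul_add, mul_smul s t y, mul_comm s t, mul_smul t s x]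
      exact E.add_mem (E.smul_mem t hsx) (E.smul_mem s hty)
    | smul a x _ hx =>
      obtain ⟨s, hs, hsx⟩ := hx
      exact ⟨s, hs, smul_comm s a x ▸ E.smul_mem a hsx⟩
  · rintro ⟨s, hs, hsz⟩
    have hz : (algebraMap R (FractionRing R) s)⁻¹ * s • z = z := by
      rw [Algebra.smul_def, inv_mul_cancel_left₀ (algebraMap_ne_zero_of_notMem hs)]
    exact hz ▸ mul_mem_locSMul (inv_algebraMap_mem_locAtSet hs) hsz

theorem locSMul_mono {Q : PrimeSpectrum R} {E F : Submodule R (FractionRing R)} (hEF : E ≤ F) :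
    locSMul R Q E ≤ locSMul R Q F :=
  Submodule.span_mono fun _ ⟨y, hy, e, he, hz⟩ => ⟨y, hy, e, hEF he, hz⟩

theorem one_mem_locSMul_idealToFrac {Q : PrimeSpectrum R} {I : Ideal R} :
    1 ∈ locSMul R Q (idealToFrac R I) ↔ ¬ I ≤ Q.asIdeal := by
  simp only [mem_locSMul_iff, ← Algebra.algebraMap_eq_smul_one, algebraMap_mem_idealToFrac,
    SetLike.not_le_iff_exists, and_comm]

theorem locSMul_idealToFrac_of_not_le {Q : PrimeSpectrum R} {I : Ideal R}
    (hIQ : ¬ I ≤ Q.asIdeal) :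
    locSMul R Q (idealToFrac R I) = locSMul R Q (idealToFrac R ⊤) := by
  refine le_antisymm (locSMul_mono (idealToFrac_mono le_top)) fun z hz => ?_
  obtain ⟨p, hpI, hpQ⟩ := SetLike.not_le_iff_exists.1 hIQ
  obtain ⟨s, hs, r, -, hr⟩ := mem_locSMul_iff.1 hz
  refine mem_locSMul_iff.2 ⟨p * s, Q.isPrime.mul_notMem hpQ hs, ?_⟩
  rw [mul_smul, ← hr, ← map_smul]
  exact algebraMap_mem_idealToFrac.2 (I.mul_mem_right r hpI)

theorem mem_specStar_iff {h : PrimeSpectrum R → ℕ∞} {k : ℕ} {E : Submodule R (FractionRing R)}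
    {z : FractionRing R} :
    z ∈ specStar R h k E ↔ ∀ Q : PrimeSpectrum R, h Q ≤ k → z ∈ locSMul R Q E := by
  simp only [specStar, Submodule.mem_iInf]

theorem specStar_idealToFrac_eq_iff {h : PrimeSpectrum R → ℕ∞} {k : ℕ} {I : Ideal R} :
    specStar R h k (idealToFrac R I) = specStar R h k (idealToFrac R ⊤) ↔
      ∀ Q : PrimeSpectrum R, h Q ≤ k → ¬ I ≤ Q.asIdeal := by
  constructor
  · intro heq
    have one_mem : 1 ∈ specStar R h k (idealToFrac R ⊤) := mem_specStar_iff.2 fun Q _ =>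
      one_mem_locSMul_idealToFrac.2 fun hQ => Q.isPrime.ne_top (top_le_iff.1 hQ)
    rw [← heq] at one_mem
    exact fun Q hQ => one_mem_locSMul_idealToFrac.1 (mem_specStar_iff.1 one_mem Q hQ)
  · exact fun hI => biInf_congr fun Q hQ => locSMul_idealToFrac_of_not_le (hI Q hQ)

theorem specStar_idealToFrac_ne_iff {h : PrimeSpectrum R → ℕ∞} {k : ℕ} {I : Ideal R} :
    specStar R h k (idealToFrac R I) ≠ specStar R h k (idealToFrac R ⊤) ↔
      ∃ Q : PrimeSpectrum R, I ≤ Q.asIdeal ∧ h Q ≤ k := by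
  rw [Ne, specStar_idealToFrac_eq_iff]
  push Not
  simp only [and_comm]

end

theorem primeValuation_recovered_from_spectral_chain_general
    (R : Type*) [CommRing R] [IsDomain R] (h : PrimeSpectrum R → ℕ∞) (I : Ideal R) :
    ⨅ (k : ℕ) (_ : specStar R h k (idealToFrac R I) ≠ specStar R h k (idealToFrac R ⊤)),
      (k : ℕ∞) = ⨅ (Q : PrimeSpectrum R) (_ : I ≤ Q.asIdeal), h Q := by
  calc
    _ = ⨅ (k : ℕ) (Q : PrimeSpectrum R) (_ : I ≤ Q.asIdeal) (_ : h Q ≤ k), (k : ℕ∞) := by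
      simp only [specStar_idealToFrac_ne_iff, iInf_exists, iInf_and]
    _ = ⨅ (Q : PrimeSpectrum R) (_ : I ≤ Q.asIdeal) (k : ℕ) (_ : h Q ≤ k), (k : ℕ∞) := by
      rw [iInf_comm]
      exact iInf_congr fun _ => iInf_comm
    _ = ⨅ (Q : PrimeSpectrum R) (_ : I ≤ Q.asIdeal), h Q := by
      simp only [iInf_natCast_ge_eq]

theorem primeValuation_recovered_from_spectral_chain
    (R : Type*) [CommRing R] [IsDomain R] (h : PrimeSpectrum R → ℕ∞)
    (hpv : IsPrimeValuation R h) :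
    ∀ P : PrimeSpectrum R, P.asIdeal ≠ ⊥ →
      h P = ⨅ (k : ℕ)
        (_ : specStar R h k (idealToFrac R P.asIdeal) ≠ specStar R h k (idealToFrac R ⊤)),
          (k : ℕ∞) := by
  intro P _
  rw [primeValuation_recovered_from_spectral_chain_general]
  exact le_antisymm (le_iInf₂ (hpv.2 P)) (iInf₂_le P le_rfl)
end

section
/- Let R be a valuation domain with quotient field K, let {*_α}_{α∈A} be a family of semistar operations on R, and let *_A be the semistar operation defined by E^{*_A} = ∩_{α∈A} E^{*_α} for each E ∈ F̄(R). For a semistar operation * on R, set F^* = {I : I an ideal of R with I^* = R^*}. Then the following are equivalent: (1) *_A is of finite type; (2) ∩_{α∈A} F^{*_α} is a localizing system of finite type on R; (3) there exists α ∈ A such that E^{*_A} = E·R^{*_α} for every E ∈ F̄(R), where E·R^{*_α} denotes the R^{*_α}-submodule of K generated by E. -/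
open Pointwise

/-- A semistar operation on an integral domain `R` with quotient field `K`, viewed as an
operation on `R`-submodules of `K` (only its behaviour on nonzero submodules matters). -/
def IsSemistarOp (R : Type*) [CommRing R] [IsDomain R]
    (s : Submodule R (FractionRing R) → Submodule R (FractionRing R)) : Prop :=
  (∀ E : Submodule R (FractionRing R), E ≠ ⊥ → E ≤ s E) ∧
  (∀ E F : Submodule R (FractionRing R), E ≠ ⊥ → F ≠ ⊥ → E ≤ F → s E ≤ s F) ∧
  (∀ x : FractionRing R, x ≠ 0 → ∀ E : Submodule R (FractionRing R), E ≠ ⊥ →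
      s (x • E) = x • s E) ∧
  (∀ E : Submodule R (FractionRing R), E ≠ ⊥ → s (s E) = s E)

/-- A semistar operation is of finite type if `E^* = ∪ {J^* : J ⊆ E, J nonzero f.g.}`. -/
def IsFiniteTypeStar (R : Type*) [CommRing R] [IsDomain R]
    (s : Submodule R (FractionRing R) → Submodule R (FractionRing R)) : Prop :=
  ∀ E : Submodule R (FractionRing R), E ≠ ⊥ →
    (s E : Set (FractionRing R)) =
      ⋃ J ∈ {J : Submodule R (FractionRing R) | J ≤ E ∧ J ≠ ⊥ ∧ J.FG},
        (s J : Set (FractionRing R))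

/-- The localizing system `F^* = {I : I a nonzero ideal of R with I^* = R^*}` associated
to a semistar operation. -/
def starLS (R : Type*) [CommRing R] [IsDomain R]
    (s : Submodule R (FractionRing R) → Submodule R (FractionRing R)) : Set (Ideal R) :=
  {I : Ideal R | I ≠ ⊥ ∧ s (idealToFrac R I) = s (idealToFrac R ⊤)}

/-- A localizing system on an integral domain `R`. -/
def IsLocalizingSystem (R : Type*) [CommRing R] (F : Set (Ideal R)) : Prop :=
  F.Nonempty ∧
  (∀ I ∈ F, ∀ J : Ideal R, I ≤ J → J ∈ F) ∧
  (∀ I ∈ F, ∀ J : Ideal R, (∀ i ∈ I, Submodule.colon J (Ideal.span {i}) ∈ F) → J ∈ F)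

/-- A family of ideals is of finite type if every member contains a finitely generated member. -/
def IsFiniteTypeLS (R : Type*) [CommRing R] (F : Set (Ideal R)) : Prop :=
  ∀ I ∈ F, ∃ J ∈ F, J ≤ I ∧ J.FG

/-!
The infimum `*_A` of semistar operations is again a semistar operation `*`, and
`⋂ F^{*_α} = F^*`, which is always a localizing system. Scaling shows that whether `*` is of finite
type is decided by the modules `E` with `1 ∈ E^*`; over a valuation domain such an `E` may be
replaced by `E ∩ R`, an ideal in `F^*`, so `*` is of finite type exactly when `F^*` is. Finitely
generated modules being principal, finite type also means `E^* = E R^*` for all `E`. It remains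
to see that the intersection of the overrings `R^{*_α}` is attained: otherwise choose
`z_α ∈ R^{*_α} ∖ R^*`; then `E = ∑ R z_α⁻¹` satisfies `1 ∈ E^* = ⋃ z_α⁻¹ R^*`, putting some `z_α`
into `R^*`.
-/

theorem exists_fg_le_mem_mul_of_mem_mul {R A : Type*} [CommSemiring R] [Semiring A] [Algebra R A]
    {T E : Submodule R A} {y : A} (hy : y ∈ T * E) : ∃ J ≤ E, J.FG ∧ y ∈ T * J := by
  obtain ⟨t, e, ht, he, hy⟩ := Submodule.mem_span_mul_finite_of_mem_mul hy
  refine ⟨Submodule.span R e, Submodule.span_le.2 he, Submodule.fg_span e.finite_toSet, ?_⟩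
  rw [← Submodule.span_mul_span] at hy
  exact mul_le_mul_left (Submodule.span_le.2 ht) _ hy

section

variable {R K : Type*} [CommRing R] [Field K] [Algebra R K]

theorem isPrincipal_of_fg_of_isBezout [IsBezout R] [IsFractionRing R K]
    {J : Submodule R K} (hJ : J.FG) : J.IsPrincipal := by
  let I : FractionalIdeal (nonZeroDivisors R) K := ⟨J, FractionalIdeal.isFractional_of_fg hJ⟩
  let e : J ≃ₗ[R] I.num := FractionalIdeal.equivNumOfIsLocalization I
  have : Module.Finite R J := Module.Finite.iff_fg.2 hJ
  have hnum : I.num.IsPrincipal :=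
    IsBezout.isPrincipal_of_FG _ (Module.Finite.iff_fg.1 (Module.Finite.equiv e))
  exact Module.isPrincipal_submodule_iff.1 (e.isPrincipal_iff.2
    (Module.isPrincipal_submodule_iff.2 hnum))

theorem pointwise_smul_ne_bot {x : K} (hx : x ≠ 0) {E : Submodule R K} (hE : E ≠ ⊥) : x • E ≠ ⊥ :=
  hx.isUnit.smul_eq_zero.not.2 hE

variable [IsDomain R] [ValuationRing R] [IsFractionRing R K]

theorem submodule_le_total (E F : Submodule R K) : E ≤ F ∨ F ≤ E := by
  refine or_iff_not_imp_left.2 fun hEF y hy => ?_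
  obtain ⟨x, hxE, hxF⟩ := SetLike.not_le_iff_exists.1 hEF
  have hx : x ≠ 0 := fun h => hxF (h ▸ F.zero_mem)
  rcases eq_or_ne y 0 with rfl | hy0
  · exact E.zero_mem
  rcases ValuationRing.isInteger_or_isInteger R (y / x) with ⟨r, hr⟩ | ⟨r, hr⟩
  · have : y = r • x := by rw [Algebra.smul_def, hr, div_mul_cancel₀ _ hx]
    exact this ▸ E.smul_mem r hxE
  · have : x = r • y := by rw [Algebra.smul_def, hr, inv_div, div_mul_cancel₀ _ hy0]
    exact absurd (this ▸ F.smul_mem r hy) hxF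

theorem directed_le_submodule {ι : Sort*} (S : ι → Submodule R K) : Directed (· ≤ ·) S :=
  fun i j => (submodule_le_total (S i) (S j)).elim
    (fun h => ⟨j, h, le_rfl⟩) (fun h => ⟨i, le_rfl, h⟩)

end

section

variable {R : Type*} [CommRing R] [IsDomain R]

theorem idealToFrac_top : idealToFrac R ⊤ = 1 := by
  rw [idealToFrac, Submodule.map_top, Submodule.one_eq_range]

theorem idealToFrac_le_idealToFrac_iff {I J : Ideal R} :
    idealToFrac R I ≤ idealToFrac R J ↔ I ≤ J :=
  Submodule.map_le_map_iff_of_injective (IsFractionRing.injective R (FractionRing R)) I J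

theorem idealToFrac_eq_bot_iff {I : Ideal R} : idealToFrac R I = ⊥ ↔ I = ⊥ :=
  (Submodule.map_injective_of_injective (IsFractionRing.injective R (FractionRing R))).eq_iff'
    (Submodule.map_bot _)

theorem exists_idealToFrac_eq_of_le_one {E : Submodule R (FractionRing R)} (hE : E ≤ 1) :
    ∃ I : Ideal R, idealToFrac R I = E :=
  ⟨E.comap (Algebra.linearMap R (FractionRing R)),
    Submodule.map_comap_eq_of_le (hE.trans_eq Submodule.one_eq_range)⟩

theorem idealToFrac_le_one (I : Ideal R) : idealToFrac R I ≤ 1 :=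
  idealToFrac_top (R := R) ▸ idealToFrac_le_idealToFrac_iff.2 le_top

end

namespace IsSemistarOp

variable {R : Type*} [CommRing R] [IsDomain R]
  {s : Submodule R (FractionRing R) → Submodule R (FractionRing R)}
  {E F : Submodule R (FractionRing R)} {x : FractionRing R}

theorem le_apply (hs : IsSemistarOp R s) (hE : E ≠ ⊥) : E ≤ s E :=
  hs.1 E hE

theorem mono (hs : IsSemistarOp R s) (hE : E ≠ ⊥) (hEF : E ≤ F) : s E ≤ s F :=
  hs.2.1 E F hE (ne_bot_of_le_ne_bot hE hEF) hEF

theorem apply_smul (hs : IsSemistarOp R s) (hx : x ≠ 0) (hE : E ≠ ⊥) : s (x • E) = x • s E :=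
  hs.2.2.1 x hx E hE

theorem apply_le_apply_of_le_apply (hs : IsSemistarOp R s) (hE : E ≠ ⊥) (hF : F ≠ ⊥)
    (hEF : E ≤ s F) : s E ≤ s F :=
  (hs.mono hE hEF).trans_eq (hs.2.2.2 F hF)

theorem one_mem_apply_one (hs : IsSemistarOp R s) : (1 : FractionRing R) ∈ s 1 :=
  hs.le_apply one_ne_zero (Submodule.one_le.1 le_rfl)

theorem mem_apply_iff_one_mem_apply_inv_smul (hs : IsSemistarOp R s) (hx : x ≠ 0) (hE : E ≠ ⊥) :
    x ∈ s E ↔ 1 ∈ s (x⁻¹ • E) := by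
  rw [hs.apply_smul (inv_ne_zero hx) hE, Submodule.mem_smul_iff_inv_mul_mem (inv_ne_zero hx),
    inv_inv, mul_one]

theorem apply_span_singleton (hs : IsSemistarOp R s) (hx : x ≠ 0) :
    s (Submodule.span R {x}) = s 1 * Submodule.span R {x} := by
  rw [← Submodule.smul_one_eq_span, hs.apply_smul hx one_ne_zero, Submodule.smul_one_eq_span,
    mul_comm, Submodule.span_singleton_mul]

theorem apply_one_mul_le (hs : IsSemistarOp R s) (E : Submodule R (FractionRing R)) :
    s 1 * E ≤ s E := by
  refine Submodule.mul_le.2 fun t ht e he => ?_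
  rcases eq_or_ne e 0 with rfl | he0
  · simp only [mul_zero, zero_mem]
  have hspan : t * e ∈ s (Submodule.span R {e}) := by
    rw [hs.apply_span_singleton he0]
    exact Submodule.mul_mem_mul ht (Submodule.mem_span_singleton_self e)
  exact hs.mono (Submodule.span_singleton_eq_bot.not.2 he0)
    ((Submodule.span_singleton_le_iff_mem _ _).2 he) hspan

protected theorem iInf {A : Sort*}
    {s : A → Submodule R (FractionRing R) → Submodule R (FractionRing R)}
    (hs : ∀ α, IsSemistarOp R (s α)) : IsSemistarOp R (fun E => ⨅ α, s α E) := by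
  refine ⟨fun E hE => le_iInf fun α => (hs α).le_apply hE,
    fun E F hE _ hEF => iInf_mono fun α => (hs α).mono hE hEF, fun x hx E hE => ?_, fun E hE => ?_⟩
  · ext y
    simp only [(hs _).apply_smul hx hE, Submodule.mem_iInf,
      Submodule.mem_smul_iff_inv_mul_mem hx]
  · have hle : E ≤ ⨅ α, s α E := le_iInf fun α => (hs α).le_apply hE
    have hne : (⨅ α, s α E) ≠ ⊥ := ne_bot_of_le_ne_bot hE hle
    exact le_antisymm
      (iInf_mono fun α => (hs α).apply_le_apply_of_le_apply hne hE (iInf_le _ α))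
      (iInf_mono fun α => (hs α).mono hE hle)

theorem isFiniteTypeStar_iff_exists_fg (hs : IsSemistarOp R s) :
    IsFiniteTypeStar R s ↔ ∀ E ≠ ⊥, ∀ y ∈ s E, ∃ J ≤ E, J ≠ ⊥ ∧ J.FG ∧ y ∈ s J := by
  refine forall₂_congr fun E _ => ?_
  have hunion : (⋃ J ∈ {J : Submodule R (FractionRing R) | J ≤ E ∧ J ≠ ⊥ ∧ J.FG},
      (s J : Set (FractionRing R))) ⊆ s E :=
    Set.iUnion₂_subset fun J hJ => hs.mono hJ.2.1 hJ.1
  rw [← hunion.ge_iff_eq']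
  simp only [Set.subset_def, Set.mem_iUnion, Set.mem_ofPred_eq, SetLike.mem_coe,
    exists_prop, and_assoc]

theorem isFiniteTypeStar_iff_one_mem (hs : IsSemistarOp R s) :
    IsFiniteTypeStar R s ↔ ∀ E ≠ ⊥, 1 ∈ s E → ∃ J ≤ E, J ≠ ⊥ ∧ J.FG ∧ 1 ∈ s J := by
  rw [hs.isFiniteTypeStar_iff_exists_fg]
  refine ⟨fun h E hE => h E hE 1, fun h E hE y hy => ?_⟩
  rcases eq_or_ne y 0 with rfl | hy0
  · obtain ⟨e, he, he0⟩ := Submodule.exists_mem_ne_zero_of_ne_bot hE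
    exact ⟨Submodule.span R {e}, (Submodule.span_singleton_le_iff_mem _ _).2 he,
      Submodule.span_singleton_eq_bot.not.2 he0, Submodule.fg_span_singleton e, zero_mem _⟩
  have hsmul : y⁻¹ • E ≠ ⊥ := pointwise_smul_ne_bot (inv_ne_zero hy0) hE
  obtain ⟨J, hJE, hJ, hJfg, h1J⟩ := h (y⁻¹ • E) hsmul
    ((hs.mem_apply_iff_one_mem_apply_inv_smul hy0 hE).1 hy)
  refine ⟨y • J, ?_, pointwise_smul_ne_bot hy0 hJ, hJfg.map _, ?_⟩
  · exact (smul_mono_right y hJE).trans_eq (smul_inv_smul₀ hy0 E)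
  · rwa [hs.mem_apply_iff_one_mem_apply_inv_smul hy0 (pointwise_smul_ne_bot hy0 hJ),
      inv_smul_smul₀ hy0]

theorem isFiniteTypeStar_iff_eq_apply_one_mul [IsBezout R] (hs : IsSemistarOp R s) :
    IsFiniteTypeStar R s ↔ ∀ E ≠ ⊥, s E = s 1 * E := by
  constructor
  · refine fun h E hE => le_antisymm (fun y hy => ?_) (hs.apply_one_mul_le E)
    obtain ⟨J, hJE, hJ, hJfg, hyJ⟩ := hs.isFiniteTypeStar_iff_exists_fg.1 h E hE y hy
    obtain ⟨x, rfl⟩ := isPrincipal_of_fg_of_isBezout hJfg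
    rw [hs.apply_span_singleton (Submodule.span_singleton_eq_bot.not.1 hJ)] at hyJ
    exact mul_le_mul_right hJE _ hyJ
  · refine fun h => hs.isFiniteTypeStar_iff_one_mem.2 fun E hE h1 => ?_
    rw [h E hE] at h1
    obtain ⟨J, hJE, hJfg, h1J⟩ := exists_fg_le_mem_mul_of_mem_mul h1
    have hJ : J ≠ ⊥ := by
      rintro rfl
      rw [Submodule.mul_bot] at h1J
      exact one_ne_zero h1J
    exact ⟨J, hJE, hJ, hJfg, hs.apply_one_mul_le J h1J⟩

theorem mem_starLS_iff (hs : IsSemistarOp R s) {I : Ideal R} :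
    I ∈ starLS R s ↔ I ≠ ⊥ ∧ 1 ∈ s (idealToFrac R I) := by
  refine and_congr_right fun hI => ?_
  have hI' := idealToFrac_eq_bot_iff.not.2 hI
  rw [idealToFrac_top]
  refine ⟨fun h => h ▸ hs.one_mem_apply_one,
    fun h => (hs.mono hI' (idealToFrac_le_one I)).antisymm ?_⟩
  exact hs.apply_le_apply_of_le_apply one_ne_zero hI' (Submodule.one_le.2 h)

theorem iInter_starLS {A : Sort*} [Nonempty A]
    {s : A → Submodule R (FractionRing R) → Submodule R (FractionRing R)}
    (hs : ∀ α, IsSemistarOp R (s α)) :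
    ⋂ α, starLS R (s α) = starLS R (fun E => ⨅ α, s α E) := by
  ext I
  simp only [Set.mem_iInter, (hs _).mem_starLS_iff, (IsSemistarOp.iInf hs).mem_starLS_iff,
    Submodule.mem_iInf, forall_and, forall_const]

theorem mem_starLS_of_le (hs : IsSemistarOp R s) {I J : Ideal R} (hI : I ∈ starLS R s)
    (hIJ : I ≤ J) : J ∈ starLS R s := by
  obtain ⟨hI0, h1⟩ := hs.mem_starLS_iff.1 hI
  exact hs.mem_starLS_iff.2 ⟨ne_bot_of_le_ne_bot hI0 hIJ,
    hs.mono (idealToFrac_eq_bot_iff.not.2 hI0) (idealToFrac_le_idealToFrac_iff.2 hIJ) h1⟩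

theorem algebraMap_mem_apply_of_colon_mem_starLS (hs : IsSemistarOp R s) {J : Ideal R} {i : R}
    (hi : Submodule.colon J (Ideal.span {i}) ∈ starLS R s) :
    algebraMap R (FractionRing R) i ∈ s (idealToFrac R J) := by
  obtain ⟨hcolon, h1⟩ := hs.mem_starLS_iff.1 hi
  have hcolon' := idealToFrac_eq_bot_iff.not.2 hcolon
  rcases eq_or_ne i 0 with rfl | hi0
  · rw [map_zero]
    exact zero_mem _
  have hi0' : algebraMap R (FractionRing R) i ≠ 0 :=
    (FaithfulSMul.algebraMap_eq_zero_iff R _).not.2 hi0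
  have hle : algebraMap R (FractionRing R) i • idealToFrac R (Submodule.colon J (Ideal.span {i})) ≤
      idealToFrac R J := by
    rintro _ ⟨_, ⟨r, hr, rfl⟩, rfl⟩
    exact ⟨i * r, mul_comm r i ▸ Ideal.mem_colon_span_singleton.1 hr, map_mul (algebraMap R _) _ _⟩
  refine hs.mono (pointwise_smul_ne_bot hi0' hcolon') hle ?_
  rwa [hs.apply_smul hi0' hcolon', Submodule.mem_smul_iff_inv_mul_mem hi0', inv_mul_cancel₀ hi0']

theorem isLocalizingSystem_starLS (hs : IsSemistarOp R s) : IsLocalizingSystem R (starLS R s) := by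
  refine ⟨⟨⊤, top_ne_bot, rfl⟩, fun I hI J => hs.mem_starLS_of_le hI, fun I hI J hJ => ?_⟩
  obtain ⟨hI0, h1⟩ := hs.mem_starLS_iff.1 hI
  have hJ0 : J ≠ ⊥ := by
    obtain ⟨i, hi, hi0⟩ := Submodule.exists_mem_ne_zero_of_ne_bot hI0
    obtain ⟨r, hr, hr0⟩ := Submodule.exists_mem_ne_zero_of_ne_bot (hJ i hi).1
    exact (Submodule.ne_bot_iff J).2
      ⟨r * i, Ideal.mem_colon_span_singleton.1 hr, mul_ne_zero hr0 hi0⟩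
  have hIJ : idealToFrac R I ≤ s (idealToFrac R J) := by
    rintro _ ⟨i, hi, rfl⟩
    exact hs.algebraMap_mem_apply_of_colon_mem_starLS (hJ i hi)
  exact hs.mem_starLS_iff.2 ⟨hJ0, hs.apply_le_apply_of_le_apply (idealToFrac_eq_bot_iff.not.2 hI0)
    (idealToFrac_eq_bot_iff.not.2 hJ0) hIJ h1⟩

theorem isFiniteTypeLS_starLS (hs : IsSemistarOp R s) (h : IsFiniteTypeStar R s) :
    IsFiniteTypeLS R (starLS R s) := by
  intro I hI
  obtain ⟨hI0, h1⟩ := hs.mem_starLS_iff.1 hI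
  obtain ⟨E, hEI, hE, hEfg, h1E⟩ :=
    hs.isFiniteTypeStar_iff_one_mem.1 h _ (idealToFrac_eq_bot_iff.not.2 hI0) h1
  obtain ⟨J, rfl⟩ := exists_idealToFrac_eq_of_le_one (hEI.trans (idealToFrac_le_one I))
  exact ⟨J, hs.mem_starLS_iff.2 ⟨idealToFrac_eq_bot_iff.not.1 hE, h1E⟩,
    idealToFrac_le_idealToFrac_iff.1 hEI,
    Submodule.fg_of_fg_map_injective _ (IsFractionRing.injective R (FractionRing R)) hEfg⟩

theorem exists_mem_starLS_idealToFrac_le [ValuationRing R] (hs : IsSemistarOp R s) (hE : E ≠ ⊥)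
    (h1 : 1 ∈ s E) : ∃ I ∈ starLS R s, idealToFrac R I ≤ E := by
  rcases submodule_le_total 1 E with hle | hle
  · exact ⟨⊤, ⟨top_ne_bot, rfl⟩, idealToFrac_top.trans_le hle⟩
  · obtain ⟨I, rfl⟩ := exists_idealToFrac_eq_of_le_one hle
    exact ⟨I, hs.mem_starLS_iff.2 ⟨idealToFrac_eq_bot_iff.not.1 hE, h1⟩, le_rfl⟩

theorem isFiniteTypeStar_of_isFiniteTypeLS [ValuationRing R] (hs : IsSemistarOp R s)
    (h : IsFiniteTypeLS R (starLS R s)) : IsFiniteTypeStar R s := by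
  refine hs.isFiniteTypeStar_iff_one_mem.2 fun E hE h1 => ?_
  obtain ⟨I, hI, hIE⟩ := hs.exists_mem_starLS_idealToFrac_le hE h1
  obtain ⟨J, hJ, hJI, hJfg⟩ := h I hI
  obtain ⟨hJ0, h1J⟩ := hs.mem_starLS_iff.1 hJ
  exact ⟨idealToFrac R J, (idealToFrac_le_idealToFrac_iff.2 hJI).trans hIE,
    idealToFrac_eq_bot_iff.not.2 hJ0, Submodule.FG.map _ hJfg, h1J⟩

theorem exists_apply_one_eq_iInf [ValuationRing R] {A : Sort*} [Nonempty A]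
    {s : A → Submodule R (FractionRing R) → Submodule R (FractionRing R)}
    (hs : ∀ α, IsSemistarOp R (s α)) (h : ∀ E ≠ ⊥, ⨅ β, s β E = (⨅ β, s β 1) * E) :
    ∃ α, s α 1 = ⨅ β, s β 1 := by
  by_contra! hne
  have hz (α : A) : ∃ z ∈ s α 1, z ∉ ⨅ β, s β 1 :=
    SetLike.not_le_iff_exists.1 fun hle => hne α (hle.antisymm (iInf_le _ α))
  choose z hz hz' using hz
  have hz0 (α : A) : z α ≠ 0 := fun h0 => hz' α (h0 ▸ zero_mem _)
  set E : Submodule R (FractionRing R) := ⨆ α, Submodule.span R {(z α)⁻¹}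
  have hzE (α : A) : (z α)⁻¹ ∈ E :=
    Submodule.mem_iSup_of_mem α (Submodule.mem_span_singleton_self _)
  have hE : E ≠ ⊥ :=
    (Submodule.ne_bot_iff E).2 ⟨_, hzE (Classical.arbitrary A), inv_ne_zero (hz0 _)⟩
  have h1 : 1 ∈ ⨅ β, s β E := (Submodule.mem_iInf _).2 fun β =>
    mul_inv_cancel₀ (hz0 β) ▸ (hs β).apply_one_mul_le E (Submodule.mul_mem_mul (hz β) (hzE β))
  rw [h E hE, Submodule.mul_iSup, Submodule.mem_iSup_of_directed _ (directed_le_submodule _)] at h1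
  obtain ⟨α, h1⟩ := h1
  obtain ⟨t, ht, htz⟩ := Submodule.mem_mul_span_singleton.1 h1
  exact hz' α (((mul_inv_eq_one₀ (hz0 α)).1 htz) ▸ ht)

end IsSemistarOp

theorem chapman_glaz_for_valuation_domains
    (R : Type*) [CommRing R] [IsDomain R] [ValuationRing R]
    (A : Type*) [Nonempty A]
    (s : A → Submodule R (FractionRing R) → Submodule R (FractionRing R))
    (hs : ∀ α : A, IsSemistarOp R (s α)) :
    (IsFiniteTypeStar R (fun E => ⨅ α : A, s α E) ↔
      (IsLocalizingSystem R (⋂ α : A, starLS R (s α)) ∧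
        IsFiniteTypeLS R (⋂ α : A, starLS R (s α)))) ∧
    (IsFiniteTypeStar R (fun E => ⨅ α : A, s α E) ↔
      (∃ α : A, ∀ E : Submodule R (FractionRing R), E ≠ ⊥ →
        (⨅ β : A, s β E) = s α (idealToFrac R ⊤) * E)) := by
  have hA := IsSemistarOp.iInf hs
  rw [IsSemistarOp.iInter_starLS hs, idealToFrac_top]
  refine ⟨⟨fun h => ⟨hA.isLocalizingSystem_starLS, hA.isFiniteTypeLS_starLS h⟩,
    fun h => hA.isFiniteTypeStar_of_isFiniteTypeLS h.2⟩, ?_⟩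
  rw [hA.isFiniteTypeStar_iff_eq_apply_one_mul]
  constructor
  · intro h
    obtain ⟨α, hα⟩ := IsSemistarOp.exists_apply_one_eq_iInf hs h
    exact ⟨α, fun E hE => hα ▸ h E hE⟩
  · rintro ⟨α, hα⟩ E hE
    have hone : ⨅ β, s β 1 = s α 1 := (hα 1 one_ne_zero).trans (mul_one _)
    rw [hone, hα E hE]
end
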